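/- Let n be a positive integer, let Q0 be a real symmetric (n+1)×(n+1) matrix with zero diagonal, and suppose there exist λ ∈ ℝ and a real (n+1)×(n+1) matrix V such that Q0 + λI = Vᵀ V; let v_i denote the i-th column of V and set K = ⌊(n+1)/2⌋ + 1. Then for every subset V1 ⊆ {1,…,n+1} with |V1| = K and n+1 ∈ V1, writing c̃ ∈ {0,1}^{n+1} for the indicator vector of V1, the clustering cost satisfies Σ_{i∈V1} ‖v_i − (1/K) Σ_{j∈V1} v_j‖² = (K−1)λ − (1/K) · c̃ᵀ Q0 c̃. -/

import Mathlib

open Matrix Finset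

/-!
A sum of squared deviations from the mean is the sum of squares minus the squared sum divided by the
number of terms. Applied to each coordinate of the columns indexed by `s`, this expresses their
clustering cost through the Gram matrix `G = Vᵀ V` alone, as `∑ i ∈ s, G i i - (c ⬝ᵥ G *ᵥ c) / #s`,
where `c` is the indicator vector of `s`. For `G = Q + λ I` with `Q` vanishing on the diagonal, the
first term is `#s * λ`, and since `c ⬝ᵥ c = #s` the shift by `λ I` contributes `-λ` to the second.
-/

section ClusteringCost

variable {ι κ R : Type*}

theorem sum_sub_mean_sq [Field R] (s : Finset ι) (f : ι → R) :
    ∑ i ∈ s, (f i - (∑ j ∈ s, f j) / #s) ^ 2 = ∑ i ∈ s, f i ^ 2 - (∑ i ∈ s, f i) ^ 2 / #s := by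
  set S := ∑ i ∈ s, f i with hS
  calc ∑ i ∈ s, (f i - S / #s) ^ 2
      = ∑ i ∈ s, f i ^ 2 - 2 * S * (S / #s) + #s * (S / #s) ^ 2 := by
        simp only [sub_sq, sum_add_distrib, sum_sub_distrib, sum_const, nsmul_eq_mul, ← sum_mul,
          ← mul_sum, ← hS]
    _ = ∑ i ∈ s, f i ^ 2 - S ^ 2 / #s := by
        obtain hs | hs := eq_or_ne (#s : R) 0
        · simp [hs]
        · field_simp
          ring

theorem mulVec_indicator_one [Fintype ι] [NonAssocSemiring R] (A : Matrix κ ι R) (s : Finset ι)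
    (k : κ) : (A *ᵥ (s : Set ι).indicator 1) k = ∑ j ∈ s, A k j := by
  classical simp [mulVec, dotProduct, Set.indicator_apply]

theorem indicator_one_dotProduct_self [Fintype ι] [NonAssocSemiring R] (s : Finset ι) :
    (s : Set ι).indicator (1 : ι → R) ⬝ᵥ (s : Set ι).indicator 1 = #s := by
  classical simp [dotProduct, Set.indicator_apply]

theorem dotProduct_transpose_mul_self_mulVec [Fintype ι] [Fintype κ] [CommSemiring R]
    (A : Matrix κ ι R) (x : ι → R) : x ⬝ᵥ (Aᵀ * A) *ᵥ x = ∑ k, (A *ᵥ x) k ^ 2 := by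
  rw [← mulVec_mulVec, dotProduct_transpose_mulVec]
  simp only [dotProduct, sq]

/-- The clustering cost of the columns of `V` indexed by `s`: the sum of their squared distances to
their centroid. The squared Euclidean norm is written as a sum of squares of coordinates, so that
the notion makes sense over any field. -/
def clusteringCost [Fintype κ] [Field R] (V : Matrix κ ι R) (s : Finset ι) : R :=
  ∑ i ∈ s, ∑ k, (V k i - (∑ j ∈ s, V k j) / #s) ^ 2

theorem clusteringCost_eq_gram [Fintype ι] [Fintype κ] [Field R] (V : Matrix κ ι R)
    (s : Finset ι) :
    clusteringCost V s = ∑ i ∈ s, (Vᵀ * V) i i -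
      ((s : Set ι).indicator 1 ⬝ᵥ (Vᵀ * V) *ᵥ (s : Set ι).indicator 1) / #s := by
  have h_diag (i : ι) : (Vᵀ * V) i i = ∑ k, V k i ^ 2 := by
    simp only [mul_apply, transpose_apply, sq]
  calc clusteringCost V s
      = ∑ k, (∑ i ∈ s, V k i ^ 2 - (∑ i ∈ s, V k i) ^ 2 / #s) := by
        rw [clusteringCost, sum_comm]
        simp only [sum_sub_mean_sq]
    _ = ∑ i ∈ s, ∑ k, V k i ^ 2 - (∑ k, (∑ i ∈ s, V k i) ^ 2) / #s := by
        rw [sum_sub_distrib, sum_comm, sum_div]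
    _ = _ := by
        simp only [h_diag, dotProduct_transpose_mul_self_mulVec, mulVec_indicator_one]

theorem clustering_cost_eq_bqp_general [Fintype ι] [DecidableEq ι] [Fintype κ] [Field R]
    {Q : Matrix ι ι R} {lam : R} {V : Matrix κ ι R} (hV : Q + lam • (1 : Matrix ι ι R) = Vᵀ * V)
    {s : Finset ι} (hdiag : ∀ i ∈ s, Q i i = 0) (hs : (#s : R) ≠ 0) :
    clusteringCost V s = (#s - 1) * lam -
      1 / #s * ((s : Set ι).indicator 1 ⬝ᵥ Q *ᵥ (s : Set ι).indicator 1) := by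
  have h_trace : ∑ i ∈ s, (Q + lam • (1 : Matrix ι ι R)) i i = #s * lam := by
    rw [sum_congr rfl fun i hi ↦ show _ = lam by simp [hdiag i hi], sum_const, nsmul_eq_mul]
  rw [clusteringCost_eq_gram, ← hV, h_trace, add_mulVec, smul_mulVec, one_mulVec, dotProduct_add,
    dotProduct_smul, indicator_one_dotProduct_self, smul_eq_mul]
  field_simp
  ring

end ClusteringCost

/-- Clustering cost in terms of the BQP objective: with Q0 + λI = Vᵀ V, for every
subset V1 of {1,…,n+1} of size K = ⌊(n+1)/2⌋ + 1 containing the index n+1,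
the clustering cost of the columns of V indexed by V1 equals
(K−1)λ − (1/K)·c̃ᵀ Q0 c̃, where c̃ is the indicator vector of V1. -/
theorem clustering_cost_eq_bqp (n : ℕ) (hn : 0 < n)
    (Q0 : Matrix (Fin (n + 1)) (Fin (n + 1)) ℝ)
    (hsymm : Q0.IsSymm) (hdiag : ∀ i, Q0 i i = 0)
    (lam : ℝ) (V : Matrix (Fin (n + 1)) (Fin (n + 1)) ℝ)
    (hV : Q0 + lam • (1 : Matrix (Fin (n + 1)) (Fin (n + 1)) ℝ) = Vᵀ * V)
    (K : ℕ) (hK : K = (n + 1) / 2 + 1)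
    (V1 : Finset (Fin (n + 1))) (hcard : V1.card = K) (hlast : Fin.last n ∈ V1)
    (ctilde : Fin (n + 1) → ℝ)
    (hctilde : ∀ i, ctilde i = if i ∈ V1 then 1 else 0) :
    ∑ i ∈ V1, ∑ k, (V k i - (1 / (K : ℝ)) * ∑ j ∈ V1, V k j) ^ 2 =
      ((K : ℝ) - 1) * lam -
        (1 / (K : ℝ)) * ∑ i, ∑ j, ctilde i * Q0 i j * ctilde j := by
  have hs : (#V1 : ℝ) ≠ 0 := Nat.cast_ne_zero.mpr (card_ne_zero_of_mem hlast)
  obtain rfl : ctilde = (V1 : Set (Fin (n + 1))).indicator 1 :=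
    funext fun i ↦ by simp [hctilde, Set.indicator_apply]
  simpa only [clusteringCost, hcard, div_eq_inv_mul, mul_one, ← toBilin'_apply, ← toBilin'_apply']
    using clustering_cost_eq_bqp_general hV (fun i _ ↦ hdiag i) hs
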